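/- Let Ω be a bounded domain in ℂⁿ, p ∈ Ω, and suppose there exist vectors ζ₁, ζ₂ in the Kobayashi indicatrix D_Ω(p) and ε > 0 with ε(ζ₁+ζ₂) ∉ D_Ω(p). Then s_Ω(p) ≤ 3ε. -/

import Mathlib

open Metric Set

noncomputable def kobayashi {E : Type*} [NormedAddCommGroup E] [NormedSpace ℂ E]
    (Ω : Set E) (p ζ : E) : ℝ :=
  sInf {α : ℝ | 0 < α ∧ ∃ φ : ℂ → E, DifferentiableOn ℂ φ (Metric.ball 0 1) ∧
    (∀ τ ∈ Metric.ball (0 : ℂ) 1, φ τ ∈ Ω) ∧ φ 0 = p ∧ α • deriv φ 0 = ζ}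

noncomputable def indicatrix {E : Type*} [NormedAddCommGroup E] [NormedSpace ℂ E]
    (Ω : Set E) (p : E) : Set E :=
  {ζ | kobayashi Ω p ζ < 1}

noncomputable def squeezing {E : Type*} [NormedAddCommGroup E] [NormedSpace ℂ E]
    (Ω : Set E) (p : E) : ℝ :=
  sSup {r : ℝ | 0 < r ∧ ∃ f : E → E, DifferentiableOn ℂ f Ω ∧ Set.InjOn f Ω ∧
    f p = 0 ∧ f '' Ω ⊆ Metric.ball 0 1 ∧ Metric.ball 0 r ⊆ f '' Ω}

/-! The derivative of a holomorphic map sends indicatrices into indicatrices, and by the Schwarz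
lemma the indicatrix of `ball 0 r` at `0` is `ball 0 r`. If `f` embeds `Ω` with `f p = 0` and
`ball 0 c ⊆ f '' Ω ⊆ ball 0 1`, then `L = f'(p)` therefore satisfies
`ball 0 c ⊆ L (D_Ω(p)) ⊆ ball 0 1`. So `‖L (ε (ζ₁ + ζ₂))‖ < 2 ε`, which forces `c ≤ 2 ε`.

The inner inclusion needs the inverse of `f` to be holomorphic, which is Osgood's theorem. At a
critical point where `f'` is nonzero, `f` reduces to an injective map with vanishing derivative on
the kernel of `f'`, which is impossible by induction on the dimension; so `f' = 0` wherever the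
Jacobian vanishes. In dimension at least two the zero set of the Jacobian, if not empty, contains a
nonconstant holomorphic curve; on it `f' = 0`, so `f` is constant along it. -/

section HolomorphicMaps

open Filter Topology

variable {E F : Type*} [NormedAddCommGroup E] [NormedSpace ℂ E] [NormedAddCommGroup F]
  [NormedSpace ℂ F]

/-! ### Cauchy estimates and holomorphy of the derivative -/

theorem norm_fderiv_le_of_forall_mem_ball_norm_le {f : E → F} {c : E} {R M : ℝ} (hR : 0 < R)
    (hf : DifferentiableOn ℂ f (ball c R)) (hM : ∀ z ∈ ball c R, ‖f z‖ ≤ M) :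
    ‖fderiv ℂ f c‖ ≤ 2 * M / R := by
  refine Complex.norm_fderiv_le_div_of_mapsTo_ball hf (fun z hz => ?_) hR
  rw [mem_closedBall, dist_eq_norm]
  linarith [norm_sub_le (f z) (f c), hM z hz, hM c (mem_ball_self hR)]

theorem norm_sub_sub_fderiv_le_of_mapsTo_ball {f : E → F} {c z : E} {R M : ℝ}
    (hf : DifferentiableOn ℂ f (ball c R)) (hM : MapsTo f (ball c R) (closedBall (f c) M))
    (hz : z ∈ ball c R) :
    ‖f z - f c - fderiv ℂ f c (z - c)‖ ≤ 2 * M * (dist z c / R) ^ 2 := by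
  have hR : 0 < R := pos_of_mem_ball hz
  have hfc : HasFDerivAt f (fderiv ℂ f c) c :=
    (hf.differentiableAt (ball_mem_nhds c hR)).hasFDerivAt
  have hle : ‖fderiv ℂ f c‖ ≤ M / R := Complex.norm_fderiv_le_div_of_mapsTo_ball hf hM hR
  have hmaps : MapsTo (fun w => f w - fderiv ℂ f c (w - c)) (ball c R)
      (closedBall (f c - fderiv ℂ f c (c - c)) (2 * M)) := by
    intro w hw
    have hfw : ‖f w - f c‖ ≤ M := by simpa [dist_eq_norm] using hM hw
    have hdw : ‖fderiv ℂ f c (w - c)‖ ≤ M :=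
      calc ‖fderiv ℂ f c (w - c)‖ ≤ M / R * R :=
            (fderiv ℂ f c).le_of_opNorm_le_of_le hle (mem_ball_iff_norm.1 hw).le
        _ = M := div_mul_cancel₀ M hR.ne'
    rw [mem_closedBall, dist_eq_norm, sub_self, map_zero, sub_zero, sub_right_comm]
    linarith [norm_sub_le (f w - f c) (fderiv ℂ f c (w - c))]
  have hlittle : (fun w => f w - fderiv ℂ f c (w - c) - (f c - fderiv ℂ f c (c - c)))
      =o[𝓝 c] fun w => ‖w - c‖ ^ 1 := by
    simpa [sub_right_comm] using hfc.isLittleO.norm_right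
  simpa [dist_eq_norm, sub_right_comm] using
    Complex.dist_le_mul_div_pow_of_mapsTo_ball_of_isLittleO (hf.sub (by fun_prop)) hmaps hlittle hz

theorem uniformCauchySeqOn_fderiv {ι : Type*} {l : Filter ι} {φ : ι → E → F} {c : E} {R : ℝ}
    (hd : ∀ᶠ i in l, DifferentiableOn ℂ (φ i) (ball c R))
    (hφ : UniformCauchySeqOn φ l (ball c R)) :
    UniformCauchySeqOn (fun i => fderiv ℂ (φ i)) l (ball c (R / 2)) := by
  intro u hu
  obtain ⟨ε, hε, hεu⟩ := Metric.mem_uniformity_dist.1 hu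
  rcases le_or_gt R 0 with hR | hR
  · simp [ball_eq_empty.2 (show R / 2 ≤ 0 by linarith)]
  filter_upwards [hφ _ (Metric.dist_mem_uniformity (show 0 < ε * R / 8 by positivity)),
    hd.prod_mk hd] with ⟨i, j⟩ hclose ⟨hi, hj⟩ y hy
  have hsub : ball y (R / 2) ⊆ ball c R := ball_subset_ball' (by linarith [mem_ball.1 hy])
  have hyR : ball c R ∈ 𝓝 y := isOpen_ball.mem_nhds (hsub (mem_ball_self (half_pos hR)))
  refine hεu ?_
  calc dist (fderiv ℂ (φ i) y) (fderiv ℂ (φ j) y) = ‖fderiv ℂ (φ i - φ j) y‖ := by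
        rw [fderiv_sub (hi.differentiableAt hyR) (hj.differentiableAt hyR), dist_eq_norm]
    _ ≤ 2 * (ε * R / 8) / (R / 2) := by
        refine norm_fderiv_le_of_forall_mem_ball_norm_le (half_pos hR)
          ((hi.sub hj).mono hsub) fun z hz => ?_
        rw [Pi.sub_apply, ← dist_eq_norm]
        exact (hclose z (hsub hz)).le
    _ < ε := by
        field_simp
        linarith

theorem differentiableAt_of_tendstoUniformlyOn [CompleteSpace F] {ι : Type*} {l : Filter ι}
    [l.NeBot] {φ : ι → E → F} {g : E → F} {c : E} {R : ℝ} (hR : 0 < R)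
    (hd : ∀ᶠ i in l, DifferentiableOn ℂ (φ i) (ball c R))
    (hφ : TendstoUniformlyOn φ g l (ball c R)) : DifferentiableAt ℂ g c := by
  have hcauchy := uniformCauchySeqOn_fderiv hd hφ.uniformCauchySeqOn
  choose! g' hg' using fun y (hy : y ∈ ball c (R / 2)) =>
    cauchy_map_iff_exists_tendsto.1 (hcauchy.cauchy_map hy)
  refine HasFDerivAt.differentiableAt
    (hasFDerivAt_of_tendstoUniformlyOnFilter (l := l) (f := φ)
      (f' := fun i => fderiv ℂ (φ i)) (g' := g') ?_ ?_ ?_)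
  · exact (tendstoUniformlyOn_iff_tendstoUniformlyOnFilter.1
      (hcauchy.tendstoUniformlyOn_of_tendsto hg')).mono_right
      (le_principal_iff.2 (ball_mem_nhds c (half_pos hR)))
  · filter_upwards [hd.prod_mk (eventually_mem_set.2 (ball_mem_nhds c hR))] with ⟨i, y⟩ ⟨hi, hy⟩
    exact (hi.differentiableAt (isOpen_ball.mem_nhds hy)).hasFDerivAt
  · filter_upwards [ball_mem_nhds c hR] with y hy using hφ.tendsto_at hy

theorem eventually_smul_mem_ball {r : ℝ} (hr : 0 < r) (v : E) :
    ∀ᶠ t : ℂ in 𝓝[≠] 0, t • v ∈ ball 0 r :=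
  (absorbent_nhds_zero (𝕜 := ℂ) (ball_mem_nhds (0 : E) hr)).eventually_nhdsNE_zero v

theorem dist_fderiv_apply_smul_sub_le {f : E → F} {z v : E} {R M : ℝ} {t : ℂ}
    (hf : DifferentiableOn ℂ f (ball z R)) (hM : ∀ w ∈ ball z R, ‖f w‖ ≤ M) (ht : t ≠ 0)
    (htv : t • v ∈ ball 0 R) :
    dist (fderiv ℂ f z v) (t⁻¹ • (f (z + t • v) - f z)) ≤ 4 * M * (‖v‖ / R) ^ 2 * ‖t‖ := by
  have hmaps : MapsTo f (ball z R) (closedBall (f z) (2 * M)) := fun w hw => by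
    rw [mem_closedBall, dist_eq_norm]
    linarith [norm_sub_le (f w) (f z), hM w hw, hM z (mem_ball_self (pos_of_mem_ball htv))]
  have hest := norm_sub_sub_fderiv_le_of_mapsTo_ball hf hmaps (z := z + t • v) (by simpa using htv)
  rw [dist_self_add_left, norm_smul] at hest
  calc dist (fderiv ℂ f z v) (t⁻¹ • (f (z + t • v) - f z))
      = ‖t‖⁻¹ * ‖f (z + t • v) - f z - fderiv ℂ f z (z + t • v - z)‖ := by
        rw [dist_comm, dist_eq_norm, ← norm_inv, ← norm_smul, add_sub_cancel_left, map_smul,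
          smul_sub _ (f (z + t • v) - f z), inv_smul_smul₀ ht]
    _ ≤ ‖t‖⁻¹ * (2 * (2 * M) * (‖t‖ * ‖v‖ / R) ^ 2) := by gcongr
    _ = 4 * M * (‖v‖ / R) ^ 2 * ‖t‖ := by
        field_simp [norm_ne_zero_iff.2 ht]
        ring

theorem tendstoUniformlyOn_smul_sub_fderiv_apply {f : E → F} {c : E} {R M : ℝ} (hR : 0 < R)
    (hf : DifferentiableOn ℂ f (ball c (2 * R))) (hM : ∀ z ∈ ball c (2 * R), ‖f z‖ ≤ M) (v : E) :
    TendstoUniformlyOn (fun (t : ℂ) z => t⁻¹ • (f (z + t • v) - f z)) (fun z => fderiv ℂ f z v)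
      (𝓝[≠] 0) (ball c R) := by
  have hlim : Tendsto (fun t : ℂ => 4 * M * (‖v‖ / R) ^ 2 * ‖t‖) (𝓝[≠] 0) (𝓝 0) := by
    refine Tendsto.mono_left ?_ nhdsWithin_le_nhds
    simpa using tendsto_norm_zero.const_mul (4 * M * (‖v‖ / R) ^ 2)
  refine Metric.tendstoUniformlyOn_iff.2 fun ε hε => ?_
  filter_upwards [eventually_smul_mem_ball hR v,
    hlim.eventually_lt_const hε, self_mem_nhdsWithin] with t htv htε ht z hz
  have hsub : ball z R ⊆ ball c (2 * R) := ball_subset_ball' (by linarith [mem_ball.1 hz])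
  exact (dist_fderiv_apply_smul_sub_le (hf.mono hsub) (fun w hw => hM w (hsub hw)) ht
    htv).trans_lt htε

theorem differentiableOn_fderiv_apply [CompleteSpace F] {f : E → F} {U : Set E}
    (hf : DifferentiableOn ℂ f U) (hU : IsOpen U) (v : E) :
    DifferentiableOn ℂ (fun z => fderiv ℂ f z v) U := by
  intro c hc
  have hbdd : ∀ᶠ z in 𝓝 c, ‖f z‖ < ‖f c‖ + 1 :=
    (hf.continuousOn.continuousAt (hU.mem_nhds hc)).norm.eventually_lt_const (lt_add_one _)
  obtain ⟨r, hr, hball⟩ := Metric.eventually_nhds_iff_ball.1 (hbdd.and (hU.eventually_mem hc))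
  have hfr : DifferentiableOn ℂ f (ball c r) := hf.mono fun z hz => (hball z hz).2
  have hquot := tendstoUniformlyOn_smul_sub_fderiv_apply (half_pos hr)
    (by rwa [mul_div_cancel₀ r two_ne_zero])
    (fun z hz => (hball z (by rwa [mul_div_cancel₀ r two_ne_zero] at hz)).1.le) v
  refine (differentiableAt_of_tendstoUniformlyOn (half_pos hr) ?_ hquot).differentiableWithinAt
  filter_upwards [eventually_smul_mem_ball (half_pos hr) v] with t ht
  have hshift : MapsTo (· + t • v) (ball c (r / 2)) (ball c r) := fun z hz => by
    have htri := dist_triangle (z + t • v) z c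
    rw [dist_self_add_left] at htri
    exact mem_ball.2 (by linarith [mem_ball.1 hz, mem_ball_zero_iff.1 ht])
  exact ((hfr.comp (by fun_prop) hshift).sub
    (hfr.mono (ball_subset_ball (half_le_self hr.le)))).const_smul t⁻¹

theorem contDiffOn_one_of_differentiableOn [FiniteDimensional ℂ E] [CompleteSpace F] {f : E → F}
    {U : Set E} (hf : DifferentiableOn ℂ f U) (hU : IsOpen U) : ContDiffOn ℂ 1 f U := by
  rw [← zero_add (1 : WithTop ℕ∞), contDiffOn_succ_iff_fderiv_of_isOpen hU, contDiffOn_zero]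
  exact ⟨hf, by simp, continuousOn_clm_apply.2 fun v =>
    (differentiableOn_fderiv_apply hf hU v).continuousOn⟩

/-! ### Hurwitz's theorem and the one-variable case -/

theorem exists_eq_zero_of_norm_lt_of_forall_mem_frontier_le_norm [Nontrivial E] {U : Set E}
    (hU : Bornology.IsBounded U) {f : E → ℂ} (hf : DiffContOnCl ℂ f U) {c : E} (hc : c ∈ U) {m : ℝ}
    (hlt : ‖f c‖ < m) (hm : ∀ t ∈ frontier U, m ≤ ‖f t‖) : ∃ t ∈ closure U, f t = 0 := by
  by_contra! hne
  have hm0 : 0 < m := (norm_nonneg _).trans_lt hlt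
  have hinv : ‖(f c)⁻¹‖ ≤ m⁻¹ :=
    Complex.norm_le_of_forall_mem_frontier_norm_le hU (hf.inv hne)
      (fun t ht => by simpa using inv_anti₀ hm0 (hm t ht)) (subset_closure hc)
  rw [norm_inv, inv_le_inv₀ (norm_pos_iff.2 (hne c (subset_closure hc))) hm0] at hinv
  exact hlt.not_ge hinv

section Hurwitz

variable {S : Type*} [TopologicalSpace S]

theorem eventually_exists_eq_zero_of_forall_mem_frontier_ne_zero [Nontrivial E] [ProperSpace E]
    {U : Set E} (hU : Bornology.IsBounded U) {g : S → E → ℂ} {s₀ : S} {c : E} (hc : c ∈ U)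
    (hd : ∀ᶠ s in 𝓝 s₀, DiffContOnCl ℂ (g s) U) (hgc : ContinuousAt (fun s => g s c) s₀)
    (hgU : ∀ t ∈ frontier U, ContinuousAt ↿g (s₀, t)) (h0 : g s₀ c = 0)
    (hne : ∀ t ∈ frontier U, g s₀ t ≠ 0) : ∀ᶠ s in 𝓝 s₀, ∃ t ∈ closure U, g s t = 0 := by
  have hcpt : IsCompact (frontier U) :=
    isCompact_of_isClosed_isBounded isClosed_frontier (hU.closure.subset frontier_subset_closure)
  obtain ⟨m, hm0, hm⟩ := hcpt.exists_forall_le' (f := fun t => ‖g s₀ t‖) (a := 0)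
    (fun t ht => ((hgU t ht).comp (f := fun t => (s₀, t))
      (by fun_prop)).norm.continuousWithinAt) (fun t ht => norm_pos_iff.2 (hne t ht))
  have hfrontier : ∀ᶠ s in 𝓝 s₀, ∀ t ∈ frontier U, m / 2 < ‖g s t‖ :=
    hcpt.eventually_forall_of_forall_eventually fun t ht =>
      (hgU t ht).norm.eventually_const_lt ((half_lt_self hm0).trans_le (hm t ht))
  have hcenter : ∀ᶠ s in 𝓝 s₀, ‖g s c‖ < m / 2 :=
    hgc.norm.eventually_lt_const (by simpa [h0] using hm0)
  filter_upwards [hd, hfrontier, hcenter] with s hds hfs hcs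
  exact exists_eq_zero_of_norm_lt_of_forall_mem_frontier_le_norm hU hds hc hcs
    fun t ht => (hfs t ht).le

theorem eventually_exists_mem_eq_zero {g : S → ℂ → ℂ} {s₀ : S} {c : ℂ}
    (hd : ∀ᶠ z in 𝓝 (s₀, c), DifferentiableAt ℂ (g z.1) z.2)
    (hgc : ContinuousAt (fun s => g s c) s₀) (hg : ∀ᶠ t in 𝓝[≠] c, ContinuousAt ↿g (s₀, t))
    (h0 : g s₀ c = 0) (hne : ¬∀ᶠ t in 𝓝 c, g s₀ t = 0) {N : Set ℂ} (hN : N ∈ 𝓝 c) :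
    ∀ᶠ s in 𝓝 s₀, ∃ t ∈ N, g s t = 0 := by
  rw [nhds_prod_eq, eventually_prod_iff] at hd
  obtain ⟨pS, hpS, pC, hpC, hd⟩ := hd
  have han : AnalyticAt ℂ (g s₀) c :=
    Complex.analyticAt_iff_eventually_differentiableAt.2
      (hpC.mono fun t ht => hd hpS.self_of_nhds ht)
  have hpunct : ∀ᶠ t in 𝓝 c, t ≠ c → g s₀ t ≠ 0 ∧ ContinuousAt ↿g (s₀, t) :=
    eventually_nhdsWithin_iff.1
      ((han.eventually_eq_zero_or_eventually_ne_zero.resolve_left hne).and hg)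
  obtain ⟨r, hr, hball⟩ :=
    Metric.nhds_basis_closedBall.mem_iff.1 (inter_mem hN (hpC.and hpunct))
  have hcl : closure (ball c r) = closedBall c r := closure_ball c hr.ne'
  have hsphere : ∀ t ∈ frontier (ball c r), g s₀ t ≠ 0 ∧ ContinuousAt ↿g (s₀, t) := by
    intro t ht
    rw [frontier_ball c hr.ne'] at ht
    exact (hball (sphere_subset_closedBall ht)).2.2 (ne_of_mem_sphere ht hr.ne')
  have hdiff : ∀ᶠ s in 𝓝 s₀, DiffContOnCl ℂ (g s) (ball c r) := hpS.mono fun s hs =>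
    DifferentiableOn.diffContOnCl fun t ht =>
      (hd hs (hball (hcl ▸ ht)).2.1).differentiableWithinAt
  filter_upwards [eventually_exists_eq_zero_of_forall_mem_frontier_ne_zero isBounded_ball
    (mem_ball_self hr) hdiff hgc (fun t ht => (hsphere t ht).2) h0 (fun t ht => (hsphere t ht).1)]
    with s ⟨t, ht, hst⟩
  exact ⟨t, (hball (hcl ▸ ht)).1, hst⟩

end Hurwitz

theorem continuousAt_uncurry_dslope_of_ne {f : ℂ → F} {s t : ℂ} (hs : ContinuousAt f s)
    (ht : ContinuousAt f t) (hst : t ≠ s) : ContinuousAt ↿(dslope f) (s, t) := by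
  have hslope : ContinuousAt (fun z : ℂ × ℂ => (z.2 - z.1)⁻¹ • (f z.2 - f z.1)) (s, t) := by
    refine ContinuousAt.smul (ContinuousAt.inv₀ (by fun_prop) (sub_ne_zero.2 hst)) ?_
    exact (ht.comp (f := Prod.snd) (x := (s, t)) continuousAt_snd).sub
      (hs.comp (f := Prod.fst) (x := (s, t)) continuousAt_fst)
  refine hslope.congr ?_
  filter_upwards [(isOpen_ne_fun continuous_snd continuous_fst).mem_nhds hst] with z hz
  exact (dslope_of_ne f hz).symm

theorem dslope_comm (f : ℂ → F) (s t : ℂ) : dslope f s t = dslope f t s := by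
  rcases eq_or_ne s t with rfl | hst
  · rfl
  · rw [dslope_of_ne f hst.symm, dslope_of_ne f hst, slope_comm]

theorem dslope_ne_zero_of_injOn {f : ℂ → F} {U : Set ℂ} (hinj : InjOn f U) {s t : ℂ} (hs : s ∈ U)
    (ht : t ∈ U) (hst : t ≠ s) : dslope f s t ≠ 0 := by
  rw [dslope_of_ne f hst, slope_def_module]
  exact smul_ne_zero (inv_ne_zero (sub_ne_zero.2 hst)) (sub_ne_zero.2 fun h => hst (hinj ht hs h))

theorem eventually_eq_of_eventually_hasFDerivAt_zero {f : E → F} {x : E}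
    (hf : ∀ᶠ y in 𝓝 x, HasFDerivAt f (0 : E →L[ℂ] F) y) : ∀ᶠ y in 𝓝 x, f y = f x := by
  obtain ⟨r, hr, hball⟩ := Metric.eventually_nhds_iff_ball.1 hf
  filter_upwards [ball_mem_nhds x hr] with y hy
  exact isOpen_ball.is_const_of_fderiv_eq_zero (𝕜 := ℂ) (convex_ball x r).isPreconnected
    (fun z hz => (hball z hz).differentiableAt.differentiableWithinAt)
    (fun z hz => (hball z hz).fderiv) hy (mem_ball_self hr)

theorem not_eventually_eq_of_injOn {X Y : Type*} [TopologicalSpace X] {f : X → Y} {U : Set X}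
    (hinj : InjOn f U) {x : X} [(𝓝[≠] x).NeBot] (hU : U ∈ 𝓝 x) : ¬∀ᶠ y in 𝓝 x, f y = f x := by
  intro hconst
  have hself : ∀ᶠ y in 𝓝 x, y = x := by
    filter_upwards [hconst, hU] with y hy hyU using hinj hyU (mem_of_mem_nhds hU) hy
  obtain ⟨y, hyx, hne⟩ := ((eventually_nhdsWithin_of_eventually_nhds hself).and
    (eventually_mem_nhdsWithin (s := {x}ᶜ))).exists
  exact hne hyx

-- If `f'(x) = 0`, Hurwitz's theorem for the divided difference `dslope f s`, as `s → x`, gives it a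
-- zero near `x` for every `s`; by injectivity that zero is `s` itself, so `f'` vanishes near `x`.
theorem deriv_ne_zero_of_injOn {f : ℂ → ℂ} {U : Set ℂ} (hf : DifferentiableOn ℂ f U)
    (hU : IsOpen U) (hinj : InjOn f U) {x : ℂ} (hx : x ∈ U) : deriv f x ≠ 0 := by
  intro hx0
  have hdiff : ∀ t ∈ U, DifferentiableAt ℂ f t := fun t ht => hf.differentiableAt (hU.mem_nhds ht)
  have hpunct : ∀ᶠ t in 𝓝[≠] x, t ∈ U ∧ t ≠ x :=
    (eventually_nhdsWithin_of_eventually_nhds (hU.eventually_mem hx)).and eventually_mem_nhdsWithin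
  have hdslope : ∀ᶠ s in 𝓝 x, ∃ t ∈ U, dslope f s t = 0 := by
    refine eventually_exists_mem_eq_zero (g := dslope f) ?_ ?_ ?_ (by simpa using hx0) ?_
      (hU.mem_nhds hx)
    · filter_upwards [(hU.prod hU).mem_nhds ⟨hx, hx⟩] with z hz
      exact ((Complex.differentiableOn_dslope (hU.mem_nhds hz.1)).2 hf).differentiableAt
        (hU.mem_nhds hz.2)
    · simpa only [dslope_comm f _ x] using continuousAt_dslope_same.2 (hdiff x hx)
    · filter_upwards [hpunct] with t ⟨ht, htx⟩
      exact continuousAt_uncurry_dslope_of_ne (hdiff x hx).continuousAt (hdiff t ht).continuousAt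
        htx
    · intro hall
      obtain ⟨t, ht0, ht, htx⟩ :=
        ((eventually_nhdsWithin_of_eventually_nhds hall).and hpunct).exists
      exact dslope_ne_zero_of_injOn hinj hx ht htx ht0
  refine not_eventually_eq_of_injOn hinj (hU.mem_nhds hx)
    (eventually_eq_of_eventually_hasFDerivAt_zero ?_)
  filter_upwards [hdslope, hU.eventually_mem hx] with s ⟨t, ht, hst⟩ hs
  obtain rfl : t = s := by_contra fun hts => dslope_ne_zero_of_injOn hinj hs ht hts hst
  rw [dslope_same] at hst
  simpa [hst] using (hdiff t ht).hasDerivAt.hasFDerivAt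

/-! ### Curves in the zero set of a holomorphic function -/

theorem differentiableOn_det [FiniteDimensional ℂ F] {A : E → F →L[ℂ] F} {U : Set E}
    (hA : ∀ v, DifferentiableOn ℂ (fun z => A z v) U) :
    DifferentiableOn ℂ (fun z => (A z).det) U := by
  classical
  set b := Module.finBasis ℂ F
  have hentry : ∀ i j, DifferentiableOn ℂ
      (fun z => LinearMap.toMatrix b b (A z : F →ₗ[ℂ] F) i j) U := fun i j => by
    simp only [LinearMap.toMatrix_apply]
    exact (b.coord i).toContinuousLinearMap.differentiable.comp_differentiableOn (hA (b j))
  simp only [ContinuousLinearMap.det, ← LinearMap.det_toMatrix b, Matrix.det_apply]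
  refine DifferentiableOn.fun_sum fun σ _ => DifferentiableOn.fun_const_smul (fun z hz => ?_) _
  exact (HasFDerivWithinAt.finsetProd fun i _ =>
    (hentry (σ i) i z hz).hasFDerivWithinAt).differentiableWithinAt

/-- The `k`-th derivative of `J` along the constant vector field `e`, that is `(∂ₑ)ᵏ J`. It measures
the order of vanishing of `J` on lines with direction `e`. -/
noncomputable def iteratedDerivAlong (e : E) (k : ℕ) (J : E → F) : E → F :=
  (fun g z => fderiv ℂ g z e)^[k] J

theorem iteratedDerivAlong_succ (e : E) (k : ℕ) (J : E → F) (z : E) :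
    iteratedDerivAlong e (k + 1) J z = fderiv ℂ (iteratedDerivAlong e k J) z e := by
  simp only [iteratedDerivAlong, Function.iterate_succ_apply']

theorem differentiableOn_iteratedDerivAlong [CompleteSpace F] {J : E → F} {U : Set E}
    (hJ : DifferentiableOn ℂ J U) (hU : IsOpen U) (e : E) (k : ℕ) :
    DifferentiableOn ℂ (iteratedDerivAlong e k J) U := by
  induction k with
  | zero => exact hJ
  | succ k ih =>
    simpa only [← iteratedDerivAlong_succ] using differentiableOn_fderiv_apply ih hU e

theorem eventually_add_smul_mem {U : Set E} (hU : IsOpen U) {q e : E} {t : ℂ}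
    (ht : q + t • e ∈ U) : ∀ᶠ s : ℂ in 𝓝 t, q + s • e ∈ U :=
  ContinuousAt.eventually_mem (by fun_prop) (hU.mem_nhds ht)

theorem iteratedDeriv_add_smul [CompleteSpace F] {J : E → F} {U : Set E}
    (hJ : DifferentiableOn ℂ J U) (hU : IsOpen U) (q e : E) (k : ℕ) {t : ℂ}
    (ht : q + t • e ∈ U) :
    iteratedDeriv k (fun s : ℂ => J (q + s • e)) t = iteratedDerivAlong e k J (q + t • e) := by
  induction k generalizing t with
  | zero => rfl
  | succ k ih =>
    have hline : HasDerivAt (fun s : ℂ => q + s • e) e t := by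
      simpa using ((hasDerivAt_id t).smul_const e).const_add q
    have hJk := ((differentiableOn_iteratedDerivAlong hJ hU e k).differentiableAt
      (hU.mem_nhds ht)).hasFDerivAt.comp_hasDerivAt t hline
    rw [iteratedDeriv_succ, iteratedDerivAlong_succ, ← hJk.deriv]
    refine EventuallyEq.deriv_eq ?_
    filter_upwards [eventually_add_smul_mem hU ht] with s hs using ih hs

theorem eventually_eq_zero_iff_iteratedDerivAlong_eq_zero [CompleteSpace F] {J : E → F} {U : Set E}
    (hJ : DifferentiableOn ℂ J U) (hU : IsOpen U) (e : E) {q : E} (hq : q ∈ U) :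
    (∀ᶠ t : ℂ in 𝓝 0, J (q + t • e) = 0) ↔ ∀ k, iteratedDerivAlong e k J q = 0 := by
  have hq0 : q + (0 : ℂ) • e ∈ U := by simpa using hq
  have han : AnalyticAt ℂ (fun t : ℂ => J (q + t • e)) 0 := by
    rw [Complex.analyticAt_iff_eventually_differentiableAt]
    filter_upwards [eventually_add_smul_mem hU hq0] with t ht
    exact (hJ.differentiableAt (hU.mem_nhds ht)).fun_comp' t (by fun_prop)
  have hk : ∀ k, iteratedDeriv k (fun t : ℂ => J (q + t • e)) 0 = iteratedDerivAlong e k J q :=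
    fun k => by simpa using iteratedDeriv_add_smul hJ hU q e k hq0
  rw [← analyticOrderAt_eq_top, ENat.eq_top_iff_forall_ge]
  simp only [natCast_le_analyticOrderAt_iff_iteratedDeriv_eq_zero han, hk]
  exact ⟨fun h k => h (k + 1) k k.lt_succ_self, fun h _ k _ => h k⟩

-- `G` is the `k`-th derivative of `J` along `e`, where every zero of `J` has order greater than `k`
-- along `e` and `q` has order `k + 1`. For scalar `J`, `{G = 0}` is smooth near `q`.
theorem exists_holomorphic_vanishing_on_zeros_fderiv_ne_zero [CompleteSpace F] {J : E → F}
    {U : Set E} (hJ : DifferentiableOn ℂ J U) (hU : IsOpen U) {p e : E} (hp : p ∈ U) (hJp : J p = 0)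
    (hne : ¬∀ᶠ t : ℂ in 𝓝 0, J (p + t • e) = 0) :
    ∃ q ∈ U, ∃ G : E → F, DifferentiableOn ℂ G U ∧ (∀ z ∈ U, J z = 0 → G z = 0) ∧ J q = 0 ∧
      fderiv ℂ G q e ≠ 0 ∧ ¬∀ᶠ t : ℂ in 𝓝 0, J (q + t • e) = 0 := by
  classical
  have hexists : ∃ k, ∃ z ∈ U, J z = 0 ∧ iteratedDerivAlong e k J z ≠ 0 := by
    rw [eventually_eq_zero_iff_iteratedDerivAlong_eq_zero hJ hU e hp, not_forall] at hne
    obtain ⟨k, hk⟩ := hne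
    exact ⟨k, p, hp, hJp, hk⟩
  obtain ⟨q, hq, hJq, hkq⟩ := Nat.find_spec hexists
  obtain ⟨k, hk⟩ : ∃ k, Nat.find hexists = k + 1 := by
    refine Nat.exists_eq_succ_of_ne_zero fun h0 => ?_
    rw [h0] at hkq
    exact hkq hJq
  refine ⟨q, hq, iteratedDerivAlong e k J, differentiableOn_iteratedDerivAlong hJ hU e k,
    fun z hz hJz => ?_, hJq, ?_, fun hall => ?_⟩
  · by_contra hGz
    exact Nat.find_min hexists (hk ▸ k.lt_succ_self) ⟨z, hz, hJz, hGz⟩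
  · rwa [hk, iteratedDerivAlong_succ] at hkq
  · exact hkq ((eventually_eq_zero_iff_iteratedDerivAlong_eq_zero hJ hU e hq).1 hall _)

theorem not_eventually_eq_zero_on_line [CompleteSpace F] {J : E → F} {U : Set E}
    (hJ : DifferentiableOn ℂ J U) (hU : IsOpen U) (hconv : Convex ℝ U) {p x : E} (hp : p ∈ U)
    (hx : x ∈ U) (hJx : J x ≠ 0) : ¬∀ᶠ t : ℂ in 𝓝 0, J (p + t • (x - p)) = 0 := by
  intro hall
  set V : Set ℂ := {t | p + t • (x - p) ∈ U}
  have hV : IsOpen V := hU.preimage (by fun_prop)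
  have hVconv : Convex ℝ V := (hconv.translate_preimage_right p).linear_preimage
    ((LinearMap.toSpanSingleton ℂ E (x - p)).restrictScalars ℝ)
  have hline : DifferentiableOn ℂ (fun t : ℂ => J (p + t • (x - p))) V := fun t ht =>
    ((hJ.differentiableAt (hU.mem_nhds ht)).fun_comp' t (by fun_prop)).differentiableWithinAt
  have hzero := (hline.analyticOnNhd hV).eqOn_zero_of_preconnected_of_eventuallyEq_zero
    hVconv.isPreconnected (z₀ := 0) (by simpa [V] using hp) hall
  exact hJx (by simpa using hzero (show (1 : ℂ) ∈ V by simpa [V] using hx))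

theorem exists_differentiable_zero_curve {S : Type*} [NormedAddCommGroup S] [NormedSpace ℂ S]
    [CompleteSpace S] {J G : S × ℂ → ℂ} {u : S × ℂ} (hJ : ∀ᶠ z in 𝓝 u, DifferentiableAt ℂ J z)
    (hJu : J u = 0) (hne : ¬∀ᶠ t in 𝓝 u.2, J (u.1, t) = 0) (hG : ContDiffAt ℂ 1 G u)
    (hG' : fderiv ℂ G u (0, 1) ≠ 0) (hJG : ∀ᶠ z in 𝓝 u, J z = 0 → G z = 0) :
    ∃ τ : S → ℂ, τ u.1 = u.2 ∧ (∀ᶠ s in 𝓝 u.1, DifferentiableAt ℂ τ s) ∧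
      ∀ᶠ s in 𝓝 u.1, J (s, τ s) = 0 := by
  have hinv : (fderiv ℂ G u ∘L .inr ℂ S ℂ).IsInvertible :=
    ⟨ContinuousLinearEquiv.unitsEquivAut ℂ (Units.mk0 _ hG'), by ext; simp⟩
  refine ⟨hG.implicitFunction one_ne_zero hinv, hG.implicitFunction_apply_self one_ne_zero hinv,
    ?_, ?_⟩
  · filter_upwards [(hG.contDiffAt_implicitFunction one_ne_zero hinv).eventually (by simp)]
      with s hs using hs.differentiableAt one_ne_zero
  have hGu : G u = 0 := hJG.self_of_nhds hJu
  have hgraph : ∀ᶠ z in 𝓝 u, J z = 0 → hG.implicitFunction one_ne_zero hinv z.1 = z.2 := by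
    filter_upwards [hJG, hG.eventually_apply_eq_iff_implicitFunction one_ne_zero hinv]
      with z hz hiff hJz
    exact hiff.1 ((hz hJz).trans hGu.symm)
  rw [nhds_prod_eq, eventually_prod_iff] at hgraph
  obtain ⟨pS, hpS, pC, hpC, hgraph⟩ := hgraph
  have hzeros : ∀ᶠ s in 𝓝 u.1, ∃ t ∈ {t | pC t}, J (s, t) = 0 := by
    refine eventually_exists_mem_eq_zero (g := fun s t => J (s, t)) ?_ ?_ ?_ hJu hne hpC
    · filter_upwards [hJ] with z hz using hz.fun_comp' z.2 (by fun_prop)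
    · exact hJ.self_of_nhds.continuousAt.comp (f := fun s => (s, u.2)) (by fun_prop)
    · refine eventually_nhdsWithin_of_eventually_nhds ?_
      have hpair : Tendsto (fun t : ℂ => (u.1, t)) (𝓝 u.2) (𝓝 u) :=
        (Continuous.prodMk_right u.1).tendsto u.2
      filter_upwards [hpair.eventually hJ] with t ht using ht.continuousAt
  filter_upwards [hzeros, hpS] with s ⟨t, ht, hst⟩ hs
  rwa [hgraph hs ht hst]

theorem eventually_eq_of_injOn_of_eventually_fderiv_eq_zero {S : Type*} [NormedAddCommGroup S]
    [NormedSpace ℂ S] {f : E → F} {U : Set E} (hf : DifferentiableOn ℂ f U) (hU : IsOpen U)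
    (hinj : InjOn f U) {γ : S → E} {s₀ : S} (hγ : ∀ᶠ s in 𝓝 s₀, DifferentiableAt ℂ γ s)
    (hγU : γ s₀ ∈ U) (hcrit : ∀ᶠ s in 𝓝 s₀, fderiv ℂ f (γ s) = 0) :
    ∀ᶠ s in 𝓝 s₀, γ s = γ s₀ := by
  have hmem : ∀ᶠ s in 𝓝 s₀, γ s ∈ U :=
    hγ.self_of_nhds.continuousAt.eventually_mem (hU.mem_nhds hγU)
  have hconst : ∀ᶠ s in 𝓝 s₀, f (γ s) = f (γ s₀) := by
    refine eventually_eq_of_eventually_hasFDerivAt_zero (f := fun s => f (γ s)) ?_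
    filter_upwards [hγ, hmem, hcrit] with s hs hsU hs0
    have hfs := (hf.differentiableAt (hU.mem_nhds hsU)).hasFDerivAt
    rw [hs0] at hfs
    simpa [Function.comp_def] using hfs.comp s hs.hasFDerivAt
  filter_upwards [hconst, hmem] with s hs hsU using hinj hsU hγU hs

theorem exists_forall_smul_add_smul_eq_zero_imp (h : 2 ≤ Module.finrank ℂ E) (e : E) :
    ∃ v : E, ∀ s t : ℂ, s • v + t • e = 0 → s = 0 := by
  obtain ⟨v, hv⟩ : ∃ v, v ∉ Submodule.span ℂ {e} := by
    by_contra! hall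
    have hone : Module.finrank ℂ E ≤ 1 :=
      finrank_le_one e fun w => Submodule.mem_span_singleton.1 (hall w)
    omega
  refine ⟨v, fun s t hst => by_contra fun hs => hv ?_⟩
  rw [← Submodule.smul_mem_iff _ hs, eq_neg_of_add_eq_zero_left hst]
  exact neg_mem (Submodule.smul_mem _ t (Submodule.mem_span_singleton_self e))

theorem exists_differentiable_zero_curve_add_smul [FiniteDimensional ℂ E] {J G : E → ℂ} {U : Set E}
    (hU : IsOpen U) (hJ : DifferentiableOn ℂ J U) (hG : DifferentiableOn ℂ G U)
    (hJG : ∀ z ∈ U, J z = 0 → G z = 0) {q e : E} (hq : q ∈ U) (hJq : J q = 0)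
    (hGq : fderiv ℂ G q e ≠ 0) (hne : ¬∀ᶠ t : ℂ in 𝓝 0, J (q + t • e) = 0) (v : E) :
    ∃ τ : ℂ → ℂ, τ 0 = 0 ∧ (∀ᶠ s in 𝓝 0, DifferentiableAt ℂ τ s) ∧
      ∀ᶠ s in 𝓝 0, q + (s • v + τ s • e) ∈ U ∧ J (q + (s • v + τ s • e)) = 0 := by
  set Λ : ℂ × ℂ → E := fun z => q + (z.1 • v + z.2 • e)
  have hΛ0 : Λ (0, 0) = q := by simp [Λ]
  have hΛU : ∀ᶠ z in 𝓝 (0, 0), Λ z ∈ U :=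
    ContinuousAt.eventually_mem (by fun_prop) (hU.mem_nhds (hΛ0 ▸ hq))
  have hΛ : HasFDerivAt Λ ((ContinuousLinearMap.fst ℂ ℂ ℂ).smulRight v +
      (ContinuousLinearMap.snd ℂ ℂ ℂ).smulRight e) (0, 0) :=
    ((hasFDerivAt_fst.smul_const v).add (hasFDerivAt_snd.smul_const e)).const_add q
  have hGΛ : HasFDerivAt G (fderiv ℂ G q) (Λ (0, 0)) := by
    rw [hΛ0]
    exact (hG.differentiableAt (hU.mem_nhds hq)).hasFDerivAt
  obtain ⟨τ, hτ0, hτ, hJτ⟩ := exists_differentiable_zero_curve (u := (0, 0)) (J := J ∘ Λ)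
    (G := G ∘ Λ)
    (hΛU.mono fun z hz => (hJ.differentiableAt (hU.mem_nhds hz)).comp z (by fun_prop))
    (by simpa [hΛ0] using hJq) (by simpa [Λ] using hne)
    (ContDiffAt.comp _ ((contDiffOn_one_of_differentiableOn hG hU).contDiffAt
      (hU.mem_nhds (hΛ0 ▸ hq))) (by fun_prop))
    (by simpa [(hGΛ.comp _ hΛ).fderiv] using hGq) (hΛU.mono fun z hz => hJG _ hz)
  have hpair : ContinuousAt (fun s => (s, τ s)) 0 :=
    continuousAt_id.prodMk hτ.self_of_nhds.continuousAt
  exact ⟨τ, hτ0, hτ, (hpair.eventually (by simpa [hτ0] using hΛU)).and hJτ⟩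

theorem not_injOn_of_fderiv_eq_zero_on_zeros [FiniteDimensional ℂ E] [CompleteSpace F]
    (hdim : 2 ≤ Module.finrank ℂ E) {f : E → F} {J : E → ℂ} {U : Set E} (hU : IsOpen U)
    (hf : DifferentiableOn ℂ f U) (hJ : DifferentiableOn ℂ J U)
    (hcrit : ∀ z ∈ U, J z = 0 → fderiv ℂ f z = 0) {p : E} (hp : p ∈ U) (hJp : J p = 0) :
    ¬InjOn f U := by
  intro hinj
  have : Nontrivial E := Module.nontrivial_of_finrank_pos (R := ℂ) (by omega)
  have : (𝓝[≠] p).NeBot := Module.punctured_nhds_neBot ℂ E p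
  obtain ⟨r, hr, hrU⟩ := Metric.isOpen_iff.1 hU p hp
  obtain ⟨x, hx, hJx⟩ : ∃ x ∈ ball p r, J x ≠ 0 := by
    by_contra! hall
    refine not_eventually_eq_of_injOn hinj (hU.mem_nhds hp)
      (eventually_eq_of_eventually_hasFDerivAt_zero ?_)
    filter_upwards [ball_mem_nhds p hr] with z hz
    rw [← hcrit z (hrU hz) (hall z hz)]
    exact (hf.differentiableAt (hU.mem_nhds (hrU hz))).hasFDerivAt
  have hline := not_eventually_eq_zero_on_line (hJ.mono hrU) isOpen_ball (convex_ball p r)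
    (mem_ball_self hr) hx hJx
  obtain ⟨q, hq, G, hG, hJG, hJq, hGq, hJqe⟩ :=
    exists_holomorphic_vanishing_on_zeros_fderiv_ne_zero hJ hU hp hJp hline
  obtain ⟨v, hv⟩ := exists_forall_smul_add_smul_eq_zero_imp hdim (x - p)
  obtain ⟨τ, hτ0, hτ, hJτ⟩ :=
    exists_differentiable_zero_curve_add_smul hU hJ hG hJG hq hJq hGq hJqe v
  have hstationary : ∀ᶠ s in 𝓝 (0 : ℂ), q + (s • v + τ s • (x - p)) = q := by
    simpa [hτ0] using eventually_eq_of_injOn_of_eventually_fderiv_eq_zero hf hU hinj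
      (γ := fun s => q + (s • v + τ s • (x - p))) (hτ.mono fun s hs => by fun_prop)
      (by simpa [hτ0] using hq) (hJτ.mono fun s hs => hcrit _ hs.1 hs.2)
  refine not_eventually_eq_of_injOn (injOn_id univ) (univ_mem (f := 𝓝 (0 : ℂ))) ?_
  filter_upwards [hstationary] with s hs using hv s (τ s) (by simpa using hs)

/-! ### Osgood's theorem -/

theorem exists_injOn_parametrization_of_range_eq_top [FiniteDimensional ℂ E]
    [FiniteDimensional ℂ F] {f : E → F} {U : Set E} (hf : DifferentiableOn ℂ f U) (hU : IsOpen U)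
    {x : E} (hx : x ∈ U) (hrange : (fderiv ℂ f x).range = ⊤) :
    ∃ (ψ : (fderiv ℂ f x).ker → E) (V : Set (fderiv ℂ f x).ker), IsOpen V ∧ 0 ∈ V ∧ ψ 0 = x ∧
      DifferentiableOn ℂ ψ V ∧ InjOn ψ V ∧ ∀ y ∈ V, ψ y ∈ U ∧ f (ψ y) = f x := by
  have : CompleteSpace E := FiniteDimensional.complete ℂ E
  have : CompleteSpace F := FiniteDimensional.complete ℂ F
  have hfx : ContDiffAt ℂ 1 f x := (contDiffOn_one_of_differentiableOn hf hU).contDiffAt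
    (hU.mem_nhds hx)
  set φ := (hfx.hasStrictFDerivAt one_ne_zero).implicitFunctionDataOfComplemented f _ hrange
    (ContinuousLinearMap.ker_closedComplemented_of_finiteDimensional_range _)
  set ψ := φ.implicitFunction (f x)
  have hpt : φ.prodFun φ.pt = (f x, 0) := by simp [φ]
  have hψ0 : ψ 0 = x := by
    simpa [φ, ψ] using φ.implicitFunction_apply_image.self_of_nhds
  have hψ : ContDiffAt ℂ 1 ψ 0 := by
    have hright : ContDiffAt ℂ 1 φ.rightFun x :=
      ContDiffAt.continuousLinearMap_comp _ (contDiffAt_id.sub contDiffAt_const)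
    have h := φ.contDiffAt_implicitFunction hfx hright one_ne_zero
    rw [hpt] at h
    exact h.comp (0 : (fderiv ℂ f x).ker) (f := fun y => (f x, y)) (by fun_prop)
  have hprod : ∀ᶠ y in 𝓝 0, φ.prodFun (ψ y) = (f x, y) := by
    have h := φ.prodFun_implicitFunction
    rw [hpt] at h
    exact h.curry_nhds.self_of_nhds
  have hev : ∀ᶠ y in 𝓝 0, DifferentiableAt ℂ ψ y ∧ φ.prodFun (ψ y) = (f x, y) ∧ ψ y ∈ U :=
    ((hψ.eventually (by simp)).mono fun y hy => hy.differentiableAt one_ne_zero).and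
      (hprod.and (hψ.continuousAt.eventually_mem (hU.mem_nhds (by rwa [hψ0]))))
  obtain ⟨V, hV, hVo, h0V⟩ := _root_.eventually_nhds_iff.1 hev
  refine ⟨ψ, V, hVo, h0V, hψ0, fun y hy => (hV y hy).1.differentiableWithinAt,
    fun y hy z hz hyz => ?_, fun y hy => ⟨(hV y hy).2.2, congrArg Prod.fst (hV y hy).2.1⟩⟩
  have hright := (hV y hy).2.1
  rw [hyz, (hV z hz).2.1] at hright
  exact (congrArg Prod.snd hright).symm

-- Lyapunov–Schmidt reduction: `f` is restricted to the level set through `x` of its component along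
-- the range of `fderiv ℂ f x`, where only its component along `N` varies.
theorem exists_injOn_ker_compl_range_fderiv_eq_zero [FiniteDimensional ℂ E] [FiniteDimensional ℂ F]
    {f : E → F} {U : Set E} (hf : DifferentiableOn ℂ f U) (hU : IsOpen U) (hinj : InjOn f U)
    {x : E} (hx : x ∈ U) {N : Submodule ℂ F} (hN : IsCompl (fderiv ℂ f x).range N) :
    ∃ (u : (fderiv ℂ f x).ker → N) (V : Set (fderiv ℂ f x).ker), IsOpen V ∧ 0 ∈ V ∧
      DifferentiableOn ℂ u V ∧ InjOn u V ∧ fderiv ℂ u 0 = 0 := by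
  set A := fderiv ℂ f x
  set P : F →L[ℂ] A.range := (A.range.projectionOnto N hN).toContinuousLinearMap
  set Q : F →L[ℂ] N := (N.projectionOnto A.range hN.symm).toContinuousLinearMap
  have hfd : ∀ z ∈ U, DifferentiableAt ℂ f z := fun z hz => hf.differentiableAt (hU.mem_nhds hz)
  have hPf : fderiv ℂ (P ∘ f) x = P ∘L A := (P.hasFDerivAt.comp x (hfd x hx).hasFDerivAt).fderiv
  have hPA : ∀ v, P (A v) = ⟨A v, v, rfl⟩ := fun v => Submodule.projectionOnto_apply_of_mem_left ..
  have hQA : ∀ v, Q (A v) = 0 := fun v => Submodule.projectionOnto_apply_of_mem_right _ ⟨v, rfl⟩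
  have hrange : (fderiv ℂ (P ∘ f) x).range = ⊤ := by
    rw [hPf, LinearMap.range_eq_top]
    rintro ⟨_, v, rfl⟩
    exact ⟨v, hPA v⟩
  have hker : (fderiv ℂ (P ∘ f) x).ker = A.ker := by
    ext v
    rw [hPf]
    exact (congrArg (· = 0) (hPA v)).to_iff.trans Subtype.ext_iff
  have hchart := exists_injOn_parametrization_of_range_eq_top
    (P.differentiable.comp_differentiableOn hf) hU hx hrange
  rw [hker] at hchart
  obtain ⟨ψ, V, hV, h0V, hψ0, hψ, hψinj, hψV⟩ := hchart
  have hfψ : DifferentiableOn ℂ (f ∘ ψ) V := hf.comp hψ fun y hy => (hψV y hy).1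
  refine ⟨Q ∘ f ∘ ψ, V, hV, h0V, Q.differentiable.comp_differentiableOn hfψ,
    fun y hy z hz hyz => ?_, ?_⟩
  · have hPyz : P (f (ψ y)) = P (f (ψ z)) := (hψV y hy).2.trans (hψV z hz).2.symm
    have hfyz : f (ψ y) = f (ψ z) := by
      apply (Submodule.prodEquivOfIsCompl A.range N hN).symm.injective
      rw [Submodule.prodEquivOfIsCompl_symm_apply, Submodule.prodEquivOfIsCompl_symm_apply]
      exact Prod.ext hPyz hyz
    exact hψinj hy hz (hinj (hψV y hy).1 (hψV z hz).1 hfyz)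
  · have hψx := (hψ.differentiableAt (hV.mem_nhds h0V)).hasFDerivAt
    have hf0 : HasFDerivAt f A (ψ 0) := hψ0 ▸ (hfd x hx).hasFDerivAt
    rw [(Q.hasFDerivAt.comp 0 (hf0.comp 0 hψx)).fderiv]
    ext y
    simp [hQA]

theorem fderiv_ne_zero_of_injOn_of_finrank_eq_one (hE : Module.finrank ℂ E = 1)
    (hF : Module.finrank ℂ F = 1) {f : E → F} {U : Set E} (hf : DifferentiableOn ℂ f U)
    (hU : IsOpen U) (hinj : InjOn f U) {x : E} (hx : x ∈ U) :
    fderiv ℂ f x ≠ 0 := by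
  intro hx0
  have : FiniteDimensional ℂ E := FiniteDimensional.of_finrank_eq_succ hE
  have : FiniteDimensional ℂ F := FiniteDimensional.of_finrank_eq_succ hF
  let K : ℂ ≃L[ℂ] E := ContinuousLinearEquiv.ofFinrankEq ((Module.finrank_self ℂ).trans hE.symm)
  let L : F ≃L[ℂ] ℂ := ContinuousLinearEquiv.ofFinrankEq (hF.trans (Module.finrank_self ℂ).symm)
  have hKx : K (K.symm x) = x := K.apply_symm_apply x
  refine deriv_ne_zero_of_injOn (f := L ∘ f ∘ K) (U := K ⁻¹' U) (x := K.symm x)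
    (L.differentiable.comp_differentiableOn (hf.comp K.differentiable.differentiableOn
      (mapsTo_preimage K U))) (hU.preimage K.continuous)
    (L.injective.comp_injOn (hinj.comp K.injective.injOn (mapsTo_preimage K U))) (by simpa) ?_
  have hfx : HasFDerivAt f (0 : E →L[ℂ] F) (K (K.symm x)) := by
    rw [hKx, ← hx0]
    exact (hf.differentiableAt (hU.mem_nhds hx)).hasFDerivAt
  rw [(L.hasFDerivAt.comp (K.symm x) (hfx.comp (K.symm x) K.hasFDerivAt)).hasDerivAt.deriv]
  simp

theorem fderiv_ne_zero_of_injOn_of_forall_injective_or_eq_zero [FiniteDimensional ℂ E]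
    [FiniteDimensional ℂ F] [Nontrivial E] (hdim : Module.finrank ℂ E = Module.finrank ℂ F)
    {f : E → F} {U : Set E} (hf : DifferentiableOn ℂ f U) (hU : IsOpen U) (hinj : InjOn f U)
    (hcrit : ∀ z ∈ U, Function.Injective (fderiv ℂ f z) ∨ fderiv ℂ f z = 0) {x : E} (hx : x ∈ U) :
    fderiv ℂ f x ≠ 0 := by
  intro hx0
  have : CompleteSpace F := FiniteDimensional.complete ℂ F
  rcases (Nat.succ_le_of_lt (Module.finrank_pos (R := ℂ) (M := E))).eq_or_lt' with hone | htwo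
  · exact fderiv_ne_zero_of_injOn_of_finrank_eq_one hone (hdim ▸ hone) hf hU hinj hx hx0
  let L : F ≃L[ℂ] E := ContinuousLinearEquiv.ofFinrankEq hdim.symm
  have hJ : DifferentiableOn ℂ (fun z => ((L : F →L[ℂ] E) ∘L fderiv ℂ f z).det) U :=
    differentiableOn_det fun v => L.differentiable.comp_differentiableOn
      (differentiableOn_fderiv_apply hf hU v)
  refine not_injOn_of_fderiv_eq_zero_on_zeros htwo hU hf hJ (fun z hz hJz => ?_) hx ?_ hinj
  · refine (hcrit z hz).resolve_left fun hinjz => ?_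
    have hker := LinearMap.bot_lt_ker_of_det_eq_zero hJz
    exact hker.ne' (LinearMap.ker_eq_bot.2 (L.injective.comp hinjz))
  · simp [hx0, ContinuousLinearMap.det]

theorem finrank_ker_eq_finrank_of_isCompl_range {k V W : Type*} [DivisionRing k] [AddCommGroup V]
    [Module k V] [AddCommGroup W] [Module k W] [FiniteDimensional k V] [FiniteDimensional k W]
    (hdim : Module.finrank k V = Module.finrank k W) (A : V →ₗ[k] W) {N : Submodule k W}
    (hN : IsCompl A.range N) : Module.finrank k A.ker = Module.finrank k N := by
  have hV := A.finrank_range_add_finrank_ker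
  have hW := Submodule.finrank_add_eq_of_isCompl hN
  omega

theorem injective_fderiv_of_injOn [FiniteDimensional ℂ E] [FiniteDimensional ℂ F]
    (hdim : Module.finrank ℂ E = Module.finrank ℂ F) {f : E → F} {U : Set E}
    (hf : DifferentiableOn ℂ f U) (hU : IsOpen U) (hinj : InjOn f U) {x : E} (hx : x ∈ U) :
    Function.Injective (fderiv ℂ f x) := by
  induction hn : Module.finrank ℂ E using Nat.strong_induction_on generalizing E F with
  | _ n ih =>
  subst hn
  have hcrit : ∀ z ∈ U, Function.Injective (fderiv ℂ f z) ∨ fderiv ℂ f z = 0 := by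
    intro z hz
    by_contra! hz0
    obtain ⟨N, hN⟩ := Submodule.exists_isCompl (fderiv ℂ f z).range
    obtain ⟨u, V, hV, h0V, hu, huinj, hu0⟩ :=
      exists_injOn_ker_compl_range_fderiv_eq_zero hf hU hinj hz hN
    have hlt : Module.finrank ℂ (fderiv ℂ f z).ker < Module.finrank ℂ E := by
      refine Submodule.finrank_lt fun htop => hz0.2 ?_
      ext v
      exact LinearMap.mem_ker.1 (htop ▸ Submodule.mem_top)
    have hinj0 := ih _ hlt (finrank_ker_eq_finrank_of_isCompl_range hdim _ hN) hu hV huinj h0V rfl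
    rw [hu0] at hinj0
    refine hz0.1 ((injective_iff_map_eq_zero _).2 fun v hv => ?_)
    exact congrArg Subtype.val (@hinj0 ⟨v, hv⟩ 0 rfl)
  rcases hcrit x hx with hinjx | hx0
  · exact hinjx
  rcases subsingleton_or_nontrivial E with hE | hE
  · exact Function.injective_of_subsingleton _
  · exact absurd hx0
      (fderiv_ne_zero_of_injOn_of_forall_injective_or_eq_zero hdim hf hU hinj hcrit hx)

theorem exists_equiv_hasStrictFDerivAt_of_injOn [FiniteDimensional ℂ E] [FiniteDimensional ℂ F]
    (hdim : Module.finrank ℂ E = Module.finrank ℂ F) {f : E → F} {U : Set E}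
    (hf : DifferentiableOn ℂ f U) (hU : IsOpen U) (hinj : InjOn f U) {x : E} (hx : x ∈ U) :
    ∃ D : E ≃L[ℂ] F, HasStrictFDerivAt f (D : E →L[ℂ] F) x := by
  have hfx : ContDiffAt ℂ 1 f x :=
    (contDiffOn_one_of_differentiableOn hf hU).contDiffAt (hU.mem_nhds hx)
  exact ⟨(LinearEquiv.ofInjectiveOfFinrankEq (fderiv ℂ f x : E →ₗ[ℂ] F)
    (injective_fderiv_of_injOn hdim hf hU hinj hx) hdim).toContinuousLinearEquiv,
    hfx.hasStrictFDerivAt one_ne_zero⟩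

theorem isOpen_image_of_injOn [FiniteDimensional ℂ E] [FiniteDimensional ℂ F]
    (hdim : Module.finrank ℂ E = Module.finrank ℂ F) {f : E → F} {U : Set E}
    (hf : DifferentiableOn ℂ f U) (hU : IsOpen U) (hinj : InjOn f U) : IsOpen (f '' U) := by
  have : CompleteSpace E := FiniteDimensional.complete ℂ E
  rw [isOpen_iff_mem_nhds, forall_mem_image]
  intro x hx
  obtain ⟨D, hD⟩ := exists_equiv_hasStrictFDerivAt_of_injOn hdim hf hU hinj hx
  exact hD.map_nhds_eq_of_equiv ▸ image_mem_map (hU.mem_nhds hx)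

theorem differentiableOn_invFunOn_of_injOn [FiniteDimensional ℂ E] [FiniteDimensional ℂ F]
    (hdim : Module.finrank ℂ E = Module.finrank ℂ F) {f : E → F} {U : Set E}
    (hf : DifferentiableOn ℂ f U) (hU : IsOpen U) (hinj : InjOn f U) :
    DifferentiableOn ℂ (Function.invFunOn f U) (f '' U) := by
  have : CompleteSpace E := FiniteDimensional.complete ℂ E
  rintro _ ⟨x, hx, rfl⟩
  obtain ⟨D, hD⟩ := exists_equiv_hasStrictFDerivAt_of_injOn hdim hf hU hinj hx
  refine (hD.to_local_left_inverse ?_).hasFDerivAt.differentiableAt.differentiableWithinAt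
  filter_upwards [hU.mem_nhds hx] with z hz using hinj.leftInvOn_invFunOn hz

/-! ### The Kobayashi indicatrix -/

/-- `IsHolomorphicDisc Ω p φ` says that `φ` restricts to a holomorphic map from the unit disc to
`Ω` centred at `p`; these are the competitors in the definition of the Kobayashi metric. The values
of `φ` outside the unit disc are irrelevant. -/
structure IsHolomorphicDisc (Ω : Set E) (p : E) (φ : ℂ → E) : Prop where
  differentiableOn : DifferentiableOn ℂ φ (ball 0 1)
  mapsTo : MapsTo φ (ball 0 1) Ω
  map_zero : φ 0 = p

theorem IsHolomorphicDisc.hasDerivAt_zero {Ω : Set E} {p : E} {φ : ℂ → E}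
    (hφ : IsHolomorphicDisc Ω p φ) : HasDerivAt φ (deriv φ 0) 0 :=
  (hφ.differentiableOn.differentiableAt (ball_mem_nhds 0 one_pos)).hasDerivAt

theorem IsHolomorphicDisc.mono {Ω Ω' : Set E} {p : E} {φ : ℂ → E}
    (hφ : IsHolomorphicDisc Ω p φ) (hΩ : Ω ⊆ Ω') : IsHolomorphicDisc Ω' p φ where
  differentiableOn := hφ.differentiableOn
  mapsTo := hφ.mapsTo.mono_right hΩ
  map_zero := hφ.map_zero

theorem IsHolomorphicDisc.comp {Ω : Set E} {Ω' : Set F} {p : E} {φ : ℂ → E} {f : E → F}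
    (hφ : IsHolomorphicDisc Ω p φ) (hf : DifferentiableOn ℂ f Ω) (hmaps : MapsTo f Ω Ω') :
    IsHolomorphicDisc Ω' (f p) (f ∘ φ) where
  differentiableOn := hf.comp hφ.differentiableOn hφ.mapsTo
  mapsTo := hmaps.comp hφ.mapsTo
  map_zero := congrArg f hφ.map_zero

theorem exists_isHolomorphicDisc_ball_smul_deriv_eq (p : E) {ζ : E} {α r : ℝ} (hα : 0 < α)
    (hr : 0 < r) (hζ : ‖ζ‖ ≤ α * r) :
    ∃ φ, IsHolomorphicDisc (ball p r) p φ ∧ α • deriv φ 0 = ζ := by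
  set v := α⁻¹ • ζ with hv
  have hvr : ‖v‖ ≤ r := by
    rwa [hv, norm_smul, Real.norm_of_nonneg (inv_pos.2 hα).le, inv_mul_le_iff₀ hα]
  have hderiv : HasDerivAt (fun τ : ℂ => p + τ • v) v 0 := by
    simpa using ((hasDerivAt_id (0 : ℂ)).smul_const v).const_add p
  refine ⟨fun τ => p + τ • v, ⟨by fun_prop, fun τ hτ => ?_, by simp⟩, ?_⟩
  · rw [mem_ball_zero_iff] at hτ
    rw [mem_ball_iff_norm, add_sub_cancel_left, norm_smul]
    nlinarith [norm_nonneg τ]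
  · rw [hderiv.deriv, smul_inv_smul₀ hα.ne']

theorem kobayashi_eq_sInf (Ω : Set E) (p ζ : E) :
    kobayashi Ω p ζ =
      sInf {α : ℝ | 0 < α ∧ ∃ φ, IsHolomorphicDisc Ω p φ ∧ α • deriv φ 0 = ζ} := by
  refine congrArg sInf (ext fun α => and_congr_right fun _ => exists_congr fun φ => ?_)
  exact ⟨fun ⟨hφ, hφΩ, hφ0, hαφ⟩ => ⟨⟨hφ, hφΩ, hφ0⟩, hαφ⟩,
    fun ⟨⟨hφ, hφΩ, hφ0⟩, hαφ⟩ => ⟨hφ, hφΩ, hφ0, hαφ⟩⟩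

theorem mem_indicatrix_iff {Ω : Set E} {p ζ : E} (hΩ : Ω ∈ 𝓝 p) :
    ζ ∈ indicatrix Ω p ↔
      ∃ α : ℝ, (0 < α ∧ ∃ φ, IsHolomorphicDisc Ω p φ ∧ α • deriv φ 0 = ζ) ∧ α < 1 := by
  rw [indicatrix, mem_ofPred_eq, kobayashi_eq_sInf]
  refine csInf_lt_iff ⟨0, fun α hα => hα.1.le⟩ ?_
  obtain ⟨r, hr, hrΩ⟩ := Metric.mem_nhds_iff.1 hΩ
  have hα : 0 < (‖ζ‖ + 1) / r := by positivity
  have hζ : ‖ζ‖ ≤ (‖ζ‖ + 1) / r * r := by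
    rw [div_mul_cancel₀ _ hr.ne']
    linarith
  obtain ⟨φ, hφ, hφζ⟩ := exists_isHolomorphicDisc_ball_smul_deriv_eq p hα hr hζ
  exact ⟨_, hα, φ, hφ.mono hrΩ, hφζ⟩

theorem mapsTo_fderiv_indicatrix {Ω : Set E} {Ω' : Set F} {f : E → F} {p : E} (hΩ : Ω ∈ 𝓝 p)
    (hΩ' : Ω' ∈ 𝓝 (f p)) (hf : DifferentiableOn ℂ f Ω) (hmaps : MapsTo f Ω Ω') :
    MapsTo (fderiv ℂ f p) (indicatrix Ω p) (indicatrix Ω' (f p)) := by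
  intro ζ hζ
  obtain ⟨α, ⟨hα, φ, hφ, rfl⟩, hα1⟩ := (mem_indicatrix_iff hΩ).1 hζ
  have hfφ : HasFDerivAt f (fderiv ℂ f p) (φ 0) :=
    hφ.map_zero.symm ▸ (hf.differentiableAt hΩ).hasFDerivAt
  refine (mem_indicatrix_iff hΩ').2 ⟨α, ⟨hα, f ∘ φ, hφ.comp hf hmaps, ?_⟩, hα1⟩
  rw [(hfφ.comp_hasDerivAt 0 hφ.hasDerivAt_zero).deriv, ContinuousLinearMap.map_smul_of_tower]

theorem indicatrix_mono {Ω Ω' : Set E} {p : E} (hΩ : Ω ∈ 𝓝 p) (hsub : Ω ⊆ Ω') :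
    indicatrix Ω p ⊆ indicatrix Ω' p := by
  have h := mapsTo_fderiv_indicatrix hΩ (mem_of_superset hΩ hsub) differentiableOn_id hsub
  rw [fderiv_id] at h
  exact h

theorem image_fderiv_indicatrix_of_injOn [FiniteDimensional ℂ E] [FiniteDimensional ℂ F]
    (hdim : Module.finrank ℂ E = Module.finrank ℂ F) {f : E → F} {Ω : Set E}
    (hf : DifferentiableOn ℂ f Ω) (hΩ : IsOpen Ω) (hinj : InjOn f Ω) {p : E} (hp : p ∈ Ω) :
    fderiv ℂ f p '' indicatrix Ω p = indicatrix (f '' Ω) (f p) := by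
  have hΩp : Ω ∈ 𝓝 p := hΩ.mem_nhds hp
  have hfΩ : f '' Ω ∈ 𝓝 (f p) :=
    (isOpen_image_of_injOn hdim hf hΩ hinj).mem_nhds (mem_image_of_mem f hp)
  set g := Function.invFunOn f Ω
  have hg : DifferentiableOn ℂ g (f '' Ω) := differentiableOn_invFunOn_of_injOn hdim hf hΩ hinj
  have hgf : LeftInvOn g f Ω := hinj.leftInvOn_invFunOn
  have hgp : g (f p) = p := hgf hp
  have hgΩ : MapsTo g (f '' Ω) Ω := mapsTo_iff_image_subset.2 hgf.image_image.subset
  have hfg : f ∘ g =ᶠ[𝓝 (f p)] id := mem_of_superset hfΩ hgf.rightInvOn_image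
  refine ((mapsTo_fderiv_indicatrix hΩp hfΩ hf (mapsTo_image f Ω)).image_subset).antisymm
    fun w hw => ⟨fderiv ℂ g (f p) w, ?_, ?_⟩
  · have h := mapsTo_fderiv_indicatrix hfΩ (by rwa [hgp]) hg hgΩ hw
    rwa [hgp] at h
  · have hchain := fderiv_comp (f p) (by rw [hgp]; exact hf.differentiableAt hΩp)
      (hg.differentiableAt hfΩ)
    rw [hfg.fderiv_eq, fderiv_id, hgp] at hchain
    exact (congrArg (· w) hchain).symm

theorem indicatrix_ball (p : E) {r : ℝ} (hr : 0 < r) : indicatrix (ball p r) p = ball 0 r := by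
  ext ζ
  rw [mem_indicatrix_iff (ball_mem_nhds p hr), mem_ball_zero_iff]
  constructor
  · rintro ⟨α, ⟨hα, φ, hφ, rfl⟩, hα1⟩
    have hschwarz : ‖deriv φ 0‖ ≤ r / 1 := Complex.norm_deriv_le_div_of_mapsTo_ball
      hφ.differentiableOn (hφ.map_zero.symm ▸ hφ.mapsTo.mono_right ball_subset_closedBall) one_pos
    rw [norm_smul, Real.norm_of_nonneg hα.le]
    nlinarith
  · intro hζ
    obtain ⟨α, hζα, hα1⟩ := exists_between ((div_lt_one hr).2 hζ)
    have hα : 0 < α := (div_nonneg (norm_nonneg ζ) hr.le).trans_lt hζα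
    exact ⟨α, ⟨hα, exists_isHolomorphicDisc_ball_smul_deriv_eq p hα hr ((div_lt_iff₀ hr).1 hζα).le⟩,
      hα1⟩

end HolomorphicMaps

theorem le_two_mul_norm_mul_of_smul_add_notMem {𝕜 V W : Type*} [NormedField 𝕜] [AddCommGroup V]
    [Module 𝕜 V] [NormedAddCommGroup W] [NormedSpace 𝕜 W] {L : V →ₗ[𝕜] W}
    (hL : Function.Injective L) {D : Set V} {c R : ℝ} (hc : ball 0 c ⊆ L '' D)
    (hR : L '' D ⊆ ball 0 R) {v w : V} (hv : v ∈ D) (hw : w ∈ D) {a : 𝕜}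
    (ha : a • (v + w) ∉ D) : c ≤ 2 * ‖a‖ * R := by
  by_contra! hlt
  have hLv : ‖L v‖ < R := mem_ball_zero_iff.1 (hR (mem_image_of_mem L hv))
  have hLw : ‖L w‖ < R := mem_ball_zero_iff.1 (hR (mem_image_of_mem L hw))
  refine ha (hL.mem_set_image.1 (hc (mem_ball_zero_iff.2 ?_)))
  calc ‖L (a • (v + w))‖ = ‖a‖ * ‖L v + L w‖ := by rw [map_smul, map_add, norm_smul]
    _ ≤ ‖a‖ * (R + R) := by gcongr; exact (norm_add_le _ _).trans (by gcongr)
    _ = 2 * ‖a‖ * R := by ring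
    _ < c := hlt

theorem squeezing_upper_bound_general {E : Type*} [NormedAddCommGroup E] [NormedSpace ℂ E]
    [FiniteDimensional ℂ E] {Ω : Set E} (hΩ : IsOpen Ω) {p : E} (hp : p ∈ Ω) {ζ₁ ζ₂ : E}
    (hζ₁ : ζ₁ ∈ indicatrix Ω p) (hζ₂ : ζ₂ ∈ indicatrix Ω p) {a : ℂ}
    (ha : a • (ζ₁ + ζ₂) ∉ indicatrix Ω p) : squeezing Ω p ≤ 2 * ‖a‖ := by
  refine Real.sSup_le ?_ (by positivity)
  rintro c ⟨hc, f, hf, hinj, hfp, hle, hge⟩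
  have himage := image_fderiv_indicatrix_of_injOn rfl hf hΩ hinj hp
  rw [hfp] at himage
  have hinner : ball 0 c ⊆ fderiv ℂ f p '' indicatrix Ω p := by
    rw [himage, ← indicatrix_ball 0 hc]
    exact indicatrix_mono (ball_mem_nhds 0 hc) hge
  have houter : fderiv ℂ f p '' indicatrix Ω p ⊆ ball 0 1 := by
    rw [himage, ← indicatrix_ball (0 : E) one_pos]
    exact indicatrix_mono (Filter.mem_of_superset (ball_mem_nhds 0 hc) hge) hle
  have hL := injective_fderiv_of_injOn rfl hf hΩ hinj hp
  simpa using le_two_mul_norm_mul_of_smul_add_notMem (L := (fderiv ℂ f p : E →ₗ[ℂ] E))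
    hL hinner houter hζ₁ hζ₂ ha

theorem squeezing_upper_bound (n : ℕ) (hn : 2 ≤ n)
    (Ω : Set (EuclideanSpace ℂ (Fin n))) (hopen : IsOpen Ω)
    (hbdd : Bornology.IsBounded Ω) (p : EuclideanSpace ℂ (Fin n)) (hp : p ∈ Ω)
    (ζ₁ ζ₂ : EuclideanSpace ℂ (Fin n))
    (hζ₁ : ζ₁ ∈ indicatrix Ω p) (hζ₂ : ζ₂ ∈ indicatrix Ω p)
    (ε : ℝ) (hε : 0 < ε) (hout : (ε : ℂ) • (ζ₁ + ζ₂) ∉ indicatrix Ω p) :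
    squeezing Ω p ≤ 3 * ε := by
  refine (squeezing_upper_bound_general hopen hp hζ₁ hζ₂ hout).trans ?_
  linarith [Complex.norm_of_nonneg hε.le]
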